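/- Let V be a finite set, let E be a finite type with maps src, dst : E → V (a finite directed multigraph), let s, t ∈ V be distinct vertices, let Δ = 2^(−k) for some natural number k, let c : E → ℕ be a cost function, and let f : E → ℝ be such that f(e) ≥ 0 and f(e)/Δ is an integer for every e ∈ E, f is conserved at every vertex v ∉ {s, t} (i.e., Σ_{e : src(e)=v} f(e) = Σ_{e : dst(e)=v} f(e)), and value(f) := Σ_{e : src(e)=s} f(e) − Σ_{e : dst(e)=s} f(e) is an integer. Then there exists f' : E → ℝ with f'(e) ∈ {⌊f(e)⌋, ⌈f(e)⌉} for every e ∈ E, f' conserved at every vertex v ∉ {s, t}, value(f') ≥ value(f), and Σ_{e∈E} c(e)·f'(e) ≤ Σ_{e∈E} c(e)·f(e). -/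

import Mathlib

open Finset

/-!
Call an edge fractional if its flow is not an integer. At a vertex with integral net outflow, a
single fractional term cannot occur, so a vertex incident to a fractional edge is incident to at
least two of them, loops counting twice. By double counting there are at least as many fractional
edges as vertices incident to them. Since net outflows sum to zero, the net outflow map on the
fractional edges is not onto, so it has a nonzero kernel: some nonzero circulation is supported on
the fractional edges.

Moving along this circulation, in the direction that does not increase the cost, until the first
fractional edge reaches an integer changes no net outflow and keeps every edge between its floor
and its ceiling. Repeating this exhausts the fractional edges.
-/

section LinearOrderedField

variable {K : Type*} [Field K] [LinearOrder K] [IsStrictOrderedRing K]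

lemma exists_add_mul_eq_endpoint {a b x d : K} (hx : x ∈ Set.Icc a b) (hd : d ≠ 0) :
    ∃ τ, 0 ≤ τ ∧ (x + τ * d = a ∨ x + τ * d = b) ∧
      ∀ ε, 0 ≤ ε → ε ≤ τ → x + ε * d ∈ Set.Icc a b := by
  obtain ⟨hax, hxb⟩ := hx
  rcases hd.lt_or_gt with hneg | hpos
  · refine ⟨(a - x) / d, div_nonneg_of_nonpos (by linarith) hneg.le,
      .inl (by rw [div_mul_cancel₀ _ hd]; ring), fun ε hε hετ ↦ ?_⟩
    have := mul_nonpos_of_nonneg_of_nonpos hε hneg.le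
    have := (le_div_iff_of_neg hneg).1 hετ
    constructor <;> linarith
  · refine ⟨(b - x) / d, div_nonneg (by linarith) hpos.le,
      .inr (by rw [div_mul_cancel₀ _ hd]; ring), fun ε hε hετ ↦ ?_⟩
    have := mul_nonneg hε hpos.le
    have := (le_div_iff₀ hpos).1 hετ
    constructor <;> linarith

lemma exists_add_smul_mem_Icc_eq_endpoint {ι : Type*} [Finite ι] {l u x d : ι → K}
    (hx : x ∈ Set.Icc l u) (hd : d ≠ 0) :
    ∃ ε : K, 0 ≤ ε ∧ x + ε • d ∈ Set.Icc l u ∧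
      ∃ i, d i ≠ 0 ∧ ((x + ε • d) i = l i ∨ (x + ε • d) i = u i) := by
  choose! τ hτ hend hbox using fun i (hi : d i ≠ 0) ↦
    exists_add_mul_eq_endpoint (⟨hx.1 i, hx.2 i⟩ : x i ∈ Set.Icc (l i) (u i)) hi
  obtain ⟨i, hi, hmin⟩ := Set.exists_min_image {i | d i ≠ 0} τ (Set.toFinite _)
    (Function.ne_iff.1 hd)
  have hmem : ∀ j, x j + τ i * d j ∈ Set.Icc (l j) (u j) := fun j ↦ by
    by_cases hj : d j = 0
    · simpa [hj] using And.intro (hx.1 j) (hx.2 j)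
    · exact hbox j hj _ (hτ i hi) (hmin j hj)
  exact ⟨τ i, hτ i hi, ⟨fun j ↦ (hmem j).1, fun j ↦ (hmem j).2⟩, i, hi, hend i hi⟩

end LinearOrderedField

lemma eq_floor_or_eq_ceil_trans {K : Type*} [Ring K] [LinearOrder K] [IsStrictOrderedRing K]
    [FloorRing K] {x y z : K} (hy : y ∈ Set.Icc (⌊x⌋ : K) ⌈x⌉) (hz : z = ⌊y⌋ ∨ z = ⌈y⌉) :
    z = ⌊x⌋ ∨ z = ⌈x⌉ := by
  have hfloor : ⌊x⌋ ≤ ⌊y⌋ := Int.le_floor.2 hy.1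
  have hceil : ⌈y⌉ ≤ ⌈x⌉ := Int.ceil_le.2 hy.2
  have := Int.floor_le_ceil y
  have := Int.ceil_le_floor_add_one x
  rcases hz with rfl | rfl <;> norm_cast <;> omega

lemma two_le_card_filter_notMem {G ι : Type*} [AddCommGroup G] (H : AddSubgroup G)
    [DecidablePred (· ∈ H)] {a : ι → G} {S : Finset ι} (hsum : ∑ i ∈ S, a i ∈ H) {i : ι}
    (hi : i ∈ S) (hai : a i ∉ H) : 2 ≤ #{j ∈ S | a j ∉ H} := by
  have hsum_notMem : ∑ j ∈ S with a j ∉ H, a j ∈ H := by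
    rw [← sum_filter_add_sum_filter_not S (a · ∈ H) a] at hsum
    exact (H.add_mem_cancel_left (sum_mem fun j hj ↦ (mem_filter.1 hj).2)).1 hsum
  have hpos : 0 < #{j ∈ S | a j ∉ H} := card_pos.2 ⟨i, mem_filter.2 ⟨hi, hai⟩⟩
  have hne_one : #{j ∈ S | a j ∉ H} ≠ 1 := fun hone ↦ by
    obtain ⟨j, hj⟩ := card_eq_one.1 hone
    rw [hj, sum_singleton] at hsum_notMem
    have hmem : j ∈ {j ∈ S | a j ∉ H} := hj ▸ mem_singleton_self j
    exact (mem_filter.1 hmem).2 hsum_notMem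
  omega

section NetOutflow

variable {V E R : Type*} [DecidableEq V] [Fintype E] [Ring R] (src dst : E → V)

/-- The net flow out of each vertex, as a linear map from edge functions to vertex functions. It is
the signed incidence map of the multigraph; its kernel consists of the circulations. -/
def netOutflow : (E → R) →ₗ[R] (V → R) where
  toFun f v := ∑ e with src e = v, f e - ∑ e with dst e = v, f e
  map_add' f g := by
    ext v
    simp only [Pi.add_apply, sum_add_distrib]
    abel
  map_smul' a f := by
    ext v
    simp only [Pi.smul_apply, smul_eq_mul, ← mul_sum, mul_sub, RingHom.id_apply]

/-- The number of edge ends at `v`, where `Sum.inl e` and `Sum.inr e` encode the tail and the head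
of the edge `e`. A loop at `v` contributes two. -/
def totalDegree (v : V) : ℕ :=
  #{i : E ⊕ E | Sum.elim src dst i = v}

variable {src dst}

lemma netOutflow_apply (f : E → R) (v : V) :
    netOutflow src dst f v = ∑ e with src e = v, f e - ∑ e with dst e = v, f e :=
  rfl

lemma netOutflow_eq_zero_iff {f : E → R} {v : V} :
    netOutflow src dst f v = 0 ↔ ∑ e with src e = v, f e = ∑ e with dst e = v, f e :=
  sub_eq_zero

lemma netOutflow_eq_sum_ends (f : E → R) (v : V) :
    netOutflow src dst f v = ∑ i : E ⊕ E with Sum.elim src dst i = v, Sum.elim f (-f) i := by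
  rw [netOutflow_apply, sub_eq_add_neg, ← sum_neg_distrib]
  simp only [sum_filter, Fintype.sum_sum_type]
  rfl

lemma netOutflow_eq_zero_of_notMem {W : Finset V} (hsrc : ∀ e, src e ∈ W) (hdst : ∀ e, dst e ∈ W)
    (f : E → R) {v : V} (hv : v ∉ W) : netOutflow src dst f v = 0 := by
  have hsrc_ne : ∀ e, src e ≠ v := fun e he ↦ hv (he ▸ hsrc e)
  have hdst_ne : ∀ e, dst e ≠ v := fun e he ↦ hv (he ▸ hdst e)
  simp [netOutflow_apply, hsrc_ne, hdst_ne]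

lemma sum_netOutflow {W : Finset V} (hsrc : ∀ e, src e ∈ W) (hdst : ∀ e, dst e ∈ W) (f : E → R) :
    ∑ v ∈ W, netOutflow src dst f v = 0 := by
  simp only [netOutflow_apply, sum_sub_distrib]
  rw [sum_fiberwise_of_maps_to fun e _ ↦ hsrc e, sum_fiberwise_of_maps_to fun e _ ↦ hdst e,
    sub_self]

lemma netOutflow_extend {E' : Type*} [Fintype E'] {i : E' → E} (hi : i.Injective) (g : E' → R) :
    netOutflow src dst (Function.extend i g 0) = netOutflow (src ∘ i) (dst ∘ i) g := by
  have hfiber (p : E → V) (v : V) :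
      ∑ e with p e = v, Function.extend i g 0 e = ∑ e with (p ∘ i) e = v, g e := by
    simp only [sum_filter]
    refine (Fintype.sum_of_injective i hi _ _ (fun e he ↦ ?_) fun e ↦ ?_).symm
    · simp [Function.extend_apply' _ _ _ he]
    · simp [hi.extend_apply]
  ext v
  simp only [netOutflow_apply, hfiber]

lemma card_le_card_edges_of_two_le_totalDegree {W : Finset V} (hsrc : ∀ e, src e ∈ W)
    (hdst : ∀ e, dst e ∈ W) (hdeg : ∀ v ∈ W, 2 ≤ totalDegree src dst v) : #W ≤ Fintype.card E := by
  have hends : ∀ i ∈ univ, Sum.elim src dst i ∈ W := fun i _ ↦ i.rec hsrc hdst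
  have hhandshake : ∑ v ∈ W, totalDegree src dst v = 2 * Fintype.card E := by
    simp only [totalDegree]
    rw [← card_eq_sum_card_fiberwise hends, card_univ, Fintype.card_sum, two_mul]
  have := card_nsmul_le_sum W _ 2 hdeg
  rw [hhandshake, smul_eq_mul] at this
  omega

lemma totalDegree_subtype (p : E → Prop) [DecidablePred p] (v : V) :
    totalDegree (fun e : {e // p e} ↦ src e) (fun e ↦ dst e) v =
      #{i : E ⊕ E | Sum.elim src dst i = v ∧ p (Sum.elim id id i)} := by
  classical
  have hinj : (Sum.map Subtype.val Subtype.val : {e // p e} ⊕ {e // p e} → E ⊕ E).Injective :=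
    Subtype.val_injective.sumMap Subtype.val_injective
  rw [totalDegree, ← card_image_of_injective _ hinj]
  congr 1
  ext (e | e) <;> simp [and_comm]

section Integrality

variable {H : AddSubgroup R} {f : E → R}

lemma netOutflow_mem_of_forall_ne {t : V} (h : ∀ v ≠ t, netOutflow src dst f v ∈ H) (v : V) :
    netOutflow src dst f v ∈ H := by
  obtain rfl | hvt := eq_or_ne v t
  · let W : Finset V := insert v (univ.image src ∪ univ.image dst)
    have hsum : ∑ w ∈ W, netOutflow src dst f w = 0 :=
      sum_netOutflow (by simp [W]) (by simp [W]) f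
    rw [← add_sum_erase W _ (mem_insert_self _ _)] at hsum
    rw [eq_neg_of_add_eq_zero_left hsum]
    exact H.neg_mem (sum_mem fun w hw ↦ h w (ne_of_mem_erase hw))
  · exact h v hvt

lemma netOutflow_mem_of_conserved {s t : V} (hs : netOutflow src dst f s ∈ H)
    (hcons : ∀ v, v ≠ s → v ≠ t → ∑ e with src e = v, f e = ∑ e with dst e = v, f e) (v : V) :
    netOutflow src dst f v ∈ H := by
  refine netOutflow_mem_of_forall_ne (t := t) (fun w hwt ↦ ?_) v
  obtain rfl | hws := eq_or_ne w s
  · exact hs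
  · rw [netOutflow_eq_zero_iff.2 (hcons w hws hwt)]
    exact H.zero_mem

lemma two_le_totalDegree_of_netOutflow_mem [DecidablePred (· ∈ H)] {v : V}
    (hv : netOutflow src dst f v ∈ H) {i : E ⊕ E} (hiv : Sum.elim src dst i = v)
    (hi : f (Sum.elim id id i) ∉ H) :
    2 ≤ totalDegree (fun e : {e // f e ∉ H} ↦ src e) (fun e ↦ dst e) v := by
  have hsign (i : E ⊕ E) : Sum.elim f (-f) i ∉ H ↔ f (Sum.elim id id i) ∉ H := by
    rcases i <;> simp
  rw [netOutflow_eq_sum_ends] at hv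
  have hcard := two_le_card_filter_notMem H hv (by simpa using hiv) ((hsign i).2 hi)
  simpa only [hsign, filter_filter, totalDegree_subtype] using hcard

end Integrality

end NetOutflow

section Circulation

variable {V E K : Type*} [DecidableEq V] [Fintype E] [Field K] {src dst : E → V}

lemma exists_circulation_of_card_le [Nonempty E] {W : Finset V} (hsrc : ∀ e, src e ∈ W)
    (hdst : ∀ e, dst e ∈ W) (hcard : #W ≤ Fintype.card E) :
    ∃ g : E → K, g ≠ 0 ∧ netOutflow src dst g = 0 := by
  let L : (E → K) →ₗ[K] (W → K) := LinearMap.funLeft K K (↑) ∘ₗ netOutflow src dst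
  have hL_apply (g : E → K) (w : W) : L g w = netOutflow src dst g w := rfl
  have hnot_surj : ¬ Function.Surjective L := fun hsurj ↦ by
    obtain ⟨e⟩ := ‹Nonempty E›
    obtain ⟨g, hg⟩ := hsurj (Pi.single ⟨src e, hsrc e⟩ 1)
    have hsum : ∑ w, L g w = 0 := by
      simpa only [hL_apply, sum_coe_sort W (netOutflow src dst g)] using sum_netOutflow hsrc hdst g
    simp [hg] at hsum
  have hnot_inj : ¬ Function.Injective L := fun hinj ↦ by
    have hfinrank : Module.finrank K (E → K) = Module.finrank K (W → K) :=
      (LinearMap.finrank_le_finrank_of_injective hinj).antisymm (by simpa using hcard)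
    exact hnot_surj ((LinearMap.injective_iff_surjective_of_finrank_eq_finrank hfinrank).1 hinj)
  simp only [injective_iff_map_eq_zero, not_forall] at hnot_inj
  obtain ⟨g, hLg, hg⟩ := hnot_inj
  refine ⟨g, hg, funext fun v ↦ ?_⟩
  by_cases hv : v ∈ W
  · exact congrFun hLg ⟨v, hv⟩
  · exact netOutflow_eq_zero_of_notMem hsrc hdst g hv

lemma exists_circulation_of_two_le_totalDegree [Nonempty E]
    (hsrc : ∀ e, 2 ≤ totalDegree src dst (src e)) (hdst : ∀ e, 2 ≤ totalDegree src dst (dst e)) :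
    ∃ g : E → K, g ≠ 0 ∧ netOutflow src dst g = 0 := by
  let W : Finset V := univ.image src ∪ univ.image dst
  have hsrcW : ∀ e, src e ∈ W := by simp [W]
  have hdstW : ∀ e, dst e ∈ W := by simp [W]
  refine exists_circulation_of_card_le hsrcW hdstW
    (card_le_card_edges_of_two_le_totalDegree hsrcW hdstW fun v hv ↦ ?_)
  rcases mem_union.1 hv with hv | hv <;> obtain ⟨e, -, rfl⟩ := mem_image.1 hv
  exacts [hsrc e, hdst e]

lemma exists_circulation_of_netOutflow_mem {H : AddSubgroup K} {f : E → K}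
    (hf : ∀ v, netOutflow src dst f v ∈ H) {e₀ : E} (he₀ : f e₀ ∉ H) :
    ∃ g : E → K, g ≠ 0 ∧ netOutflow src dst g = 0 ∧ ∀ e, f e ∈ H → g e = 0 := by
  classical
  have : Nonempty {e // f e ∉ H} := ⟨⟨e₀, he₀⟩⟩
  obtain ⟨g, hg, hcirc⟩ := exists_circulation_of_two_le_totalDegree (K := K)
    (fun e : {e // f e ∉ H} ↦
      two_le_totalDegree_of_netOutflow_mem (hf (src e)) (i := .inl e) rfl e.2)
    (fun e : {e // f e ∉ H} ↦
      two_le_totalDegree_of_netOutflow_mem (hf (dst e)) (i := .inr e) rfl e.2)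
  have hval := Subtype.val_injective (p := fun e ↦ f e ∉ H)
  refine ⟨Function.extend Subtype.val g 0, fun hzero ↦ hg (funext fun e ↦ ?_),
    (netOutflow_extend hval g).trans hcirc, fun e he ↦ ?_⟩
  · simpa [hval.extend_apply] using congrFun hzero e
  · exact Function.extend_apply' _ _ _ (by rintro ⟨⟨e, he'⟩, rfl⟩; exact he' he)

end Circulation

section Rounding

open scoped Matrix

variable {V E K : Type*} [DecidableEq V] [Fintype E] [Field K] [LinearOrder K]
  [IsStrictOrderedRing K] {src dst : E → V}

lemma exists_circulation_dotProduct_nonpos (c : E → K) {H : AddSubgroup K} {f : E → K}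
    (hf : ∀ v, netOutflow src dst f v ∈ H) {e₀ : E} (he₀ : f e₀ ∉ H) :
    ∃ g : E → K, g ≠ 0 ∧ netOutflow src dst g = 0 ∧ (∀ e, f e ∈ H → g e = 0) ∧ c ⬝ᵥ g ≤ 0 := by
  obtain ⟨g, hg, hcirc, hsupp⟩ := exists_circulation_of_netOutflow_mem hf he₀
  rcases le_total (c ⬝ᵥ g) 0 with hcost | hcost
  · exact ⟨g, hg, hcirc, hsupp, hcost⟩
  · exact ⟨-g, neg_ne_zero.2 hg, by rw [map_neg, hcirc, neg_zero],
      fun e he ↦ by simp [hsupp e he], by simpa using hcost⟩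

variable [FloorRing K]

/-- The edges on which `f` is not an integer. Their number decreases with each rounding step. -/
def fractionalEdges (f : E → K) : Finset E :=
  {e | Int.fract (f e) ≠ 0}

lemma mem_fractionalEdges {f : E → K} {e : E} :
    e ∈ fractionalEdges f ↔ f e ∉ (Int.castAddHom K).range := by
  simp only [fractionalEdges, mem_filter_univ, ne_eq, Int.fract_eq_zero_iff]
  rfl

lemma exists_fractionalEdges_ssubset (c : E → K) {f : E → K}
    (hf : ∀ v, netOutflow src dst f v ∈ (Int.castAddHom K).range)
    (hfrac : (fractionalEdges f).Nonempty) :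
    ∃ f₁ : E → K, (∀ e, f₁ e ∈ Set.Icc (⌊f e⌋ : K) ⌈f e⌉) ∧
      netOutflow src dst f₁ = netOutflow src dst f ∧ c ⬝ᵥ f₁ ≤ c ⬝ᵥ f ∧
      fractionalEdges f₁ ⊂ fractionalEdges f := by
  obtain ⟨e₀, he₀⟩ := hfrac
  obtain ⟨g, hg, hcirc, hsupp, hcost⟩ :=
    exists_circulation_dotProduct_nonpos c hf (mem_fractionalEdges.1 he₀)
  obtain ⟨ε, hε, hbox, e₁, hge₁, hend⟩ := exists_add_smul_mem_Icc_eq_endpoint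
    (l := fun e ↦ (⌊f e⌋ : K)) (u := fun e ↦ (⌈f e⌉ : K)) (x := f)
    ⟨fun e ↦ Int.floor_le (f e), fun e ↦ Int.le_ceil (f e)⟩ hg
  refine ⟨f + ε • g, fun e ↦ ⟨hbox.1 e, hbox.2 e⟩, by simp [hcirc], ?_, ?_⟩
  · rw [dotProduct_add, dotProduct_smul, smul_eq_mul]
    exact add_le_of_nonpos_right (mul_nonpos_of_nonneg_of_nonpos hε hcost)
  · refine (ssubset_iff_of_subset fun e he ↦ ?_).2 ⟨e₁, ?_, ?_⟩
    · rw [mem_fractionalEdges] at he ⊢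
      exact fun hfe ↦ he (by simpa [hsupp e hfe] using hfe)
    · exact mem_fractionalEdges.2 fun hfe₁ ↦ hge₁ (hsupp e₁ hfe₁)
    · rw [mem_fractionalEdges, not_not]
      rcases hend with hend | hend
      exacts [⟨⌊f e₁⌋, hend.symm⟩, ⟨⌈f e₁⌉, hend.symm⟩]

theorem flow_rounding_with_costs_general (src dst : E → V) (c f : E → K)
    (hf : ∀ v, netOutflow src dst f v ∈ (Int.castAddHom K).range) :
    ∃ f' : E → K, (∀ e, f' e = ⌊f e⌋ ∨ f' e = ⌈f e⌉) ∧
      netOutflow src dst f' = netOutflow src dst f ∧ c ⬝ᵥ f' ≤ c ⬝ᵥ f := by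
  induction hF : fractionalEdges f using Finset.strongInduction generalizing f with
  | H F ih =>
    subst hF
    rcases (fractionalEdges f).eq_empty_or_nonempty with hempty | hfrac
    · have hint : ∀ e, f e = ⌊f e⌋ := fun e ↦ by
        obtain ⟨z, hz⟩ : f e ∈ (Int.castAddHom K).range := by
          simpa only [mem_fractionalEdges, not_not] using eq_empty_iff_forall_notMem.1 hempty e
        simp [← hz]
      exact ⟨f, fun e ↦ .inl (hint e), rfl, le_rfl⟩
    · obtain ⟨f₁, hbox, hnet₁, hcost₁, hlt⟩ := exists_fractionalEdges_ssubset c hf hfrac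
      obtain ⟨f', hround, hnet, hcost⟩ := ih _ hlt f₁ (hnet₁ ▸ hf) rfl
      exact ⟨f', fun e ↦ eq_floor_or_eq_ceil_trans (hbox e) (hround e), hnet.trans hnet₁,
        hcost.trans hcost₁⟩

end Rounding

/-- Cost-aware version of Cohen's flow rounding theorem: an `s`-`t` flow with
integral total value whose edge values are integer multiples of `Δ = 2^(-k)`
can be rounded edge-by-edge to `⌊f(e)⌋` or `⌈f(e)⌉` while remaining a flow,
not decreasing the value, and not increasing the cost. -/
theorem flow_rounding_with_costs {V E : Type*} [Fintype V] [DecidableEq V] [Fintype E]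
    (src dst : E → V) (s t : V) (hst : s ≠ t)
    (k : ℕ) (Δ : ℝ) (hΔ : Δ = (2 : ℝ) ^ (-(k : ℤ)))
    (c : E → ℕ)
    (f : E → ℝ) (hf0 : ∀ e, 0 ≤ f e) (hint : ∀ e, ∃ z : ℤ, f e = z * Δ)
    (hcons : ∀ v : V, v ≠ s → v ≠ t →
      ∑ e ∈ univ.filter (fun e => src e = v), f e
        = ∑ e ∈ univ.filter (fun e => dst e = v), f e)
    (hval : ∃ z : ℤ, (∑ e ∈ univ.filter (fun e => src e = s), f e)
      - (∑ e ∈ univ.filter (fun e => dst e = s), f e) = z) :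
    ∃ f' : E → ℝ,
      (∀ e, f' e = (⌊f e⌋ : ℝ) ∨ f' e = (⌈f e⌉ : ℝ)) ∧
      (∀ v : V, v ≠ s → v ≠ t →
        ∑ e ∈ univ.filter (fun e => src e = v), f' e
          = ∑ e ∈ univ.filter (fun e => dst e = v), f' e) ∧
      ((∑ e ∈ univ.filter (fun e => src e = s), f e)
          - (∑ e ∈ univ.filter (fun e => dst e = s), f e)
        ≤ (∑ e ∈ univ.filter (fun e => src e = s), f' e)
          - (∑ e ∈ univ.filter (fun e => dst e = s), f' e)) ∧
      (∑ e, (c e : ℝ) * f' e ≤ ∑ e, (c e : ℝ) * f e) := by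
  obtain ⟨f', hround, hnet, hcost⟩ := flow_rounding_with_costs_general src dst (fun e ↦ (c e : ℝ)) f
    (netOutflow_mem_of_conserved (hval.imp fun _ ↦ Eq.symm) hcons)
  exact ⟨f', hround, fun v hvs hvt ↦ netOutflow_eq_zero_iff.1
    ((congrFun hnet v).trans (netOutflow_eq_zero_iff.2 (hcons v hvs hvt))), (congrFun hnet s).ge,
    hcost⟩
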